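/- If a tetrahedron is loadable, i.e. there exists a point p in its interior such that the tetrahedron is stable on exactly one face with load p, then the tetrahedron has an obtuse path: its vertices can be labeled a, b, c, d so that the edges ab, bc and cd are all obtuse. -/

import Mathlib

open RealInnerProductSpace

noncomputable section

abbrev E3 : Type := EuclideanSpace ℝ (Fin 3)

/-- The tetrahedron with load point `p` is *stable* on the face with vertices
`v₁, v₂, v₃`: the orthogonal projection of `p` onto the affine span of the face
lies in the relative (intrinsic) interior of the face. -/
def StableOn (p v₁ v₂ v₃ : E3) : Prop :=
  ∃ q ∈ intrinsicInterior ℝ (convexHull ℝ ({v₁, v₂, v₃} : Set E3)),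
    ∀ w ∈ (affineSpan ℝ ({v₁, v₂, v₃} : Set E3)).direction, ⟪p - q, w⟫ = 0

/-- Placed on the face with vertices `apex, e₁, e₂` and load point `p`, the
tetrahedron *tips over* the edge `e₁e₂` onto the adjacent face: the orthogonal
projection `q` of `p` onto the plane of the face lies strictly on the opposite
side of the line through `e₁, e₂` from the remaining vertex `apex`. -/
def TipsOver (p apex e₁ e₂ : E3) : Prop :=
  ∃ q ∈ affineSpan ℝ ({apex, e₁, e₂} : Set E3),
    (∀ w ∈ (affineSpan ℝ ({apex, e₁, e₂} : Set E3)).direction, ⟪p - q, w⟫ = 0) ∧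
    (affineSpan ℝ ({e₁, e₂} : Set E3)).SOppSide q apex

/-- The edge `PQ` of the tetrahedron `PQRS` is *obtuse*: writing `R'`, `S'` for
the components of `R - P`, `S - P` orthogonal to `Q - P`, we have `⟪R', S'⟫ < 0`. -/
def ObtuseEdge (P Q R S : E3) : Prop :=
  ⟪(R - P) - (⟪R - P, Q - P⟫ / ⟪Q - P, Q - P⟫) • (Q - P),
   (S - P) - (⟪S - P, Q - P⟫ / ⟪Q - P, Q - P⟫) • (Q - P)⟫ < 0

/-- Stability on the `i`-th face of tetrahedron `ABCD` (the face opposite the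
`i`-th vertex). -/
def FaceStable (A B C D p : E3) : Fin 4 → Prop
  | 0 => StableOn p B C D
  | 1 => StableOn p A C D
  | 2 => StableOn p A B D
  | 3 => StableOn p A B C

/-!
Suppose that the tetrahedron is not stable on a facet `F`. Then the foot of the load `p` on the
plane of `F` lies beyond some other facet `G`. This makes the dihedral angle between `F` and `G`
obtuse, and by the Cauchy–Schwarz inequality for their normals `p` is closer to `G` than to `F`.
Hence every facet but the stable one is joined by an obtuse edge to a facet closer to `p`, and the
graph of obtuse edges on the four facets is connected. The suitably scaled normals sum to zero, so
no facet meets all three others at obtuse angles. A connected graph on four vertices none of which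
is adjacent to all others has a Hamiltonian path, and the three edges of the tetrahedron along a
Hamiltonian path of facets form a path through its vertices.
-/

section Face

variable {ι k V P : Type*} [AddCommGroup V] [AddTorsor V P]

theorem coord_eq_zero_of_mem_affineSpan_image [Ring k] [Module k V] (b : AffineBasis ι k P)
    {s : Set ι} {i : ι} {x : P} (hx : x ∈ affineSpan k (b '' s)) (hi : i ∉ s) :
    b.coord i x = 0 := by
  have hvertices : (b '' s).EqOn (b.coord i) (AffineMap.const k P 0) := by
    rintro _ ⟨j, hj, rfl⟩
    exact b.coord_apply_ne (ne_of_mem_of_not_mem hj hi).symm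
  exact AffineMap.eqOn_affineSpan hvertices hx

theorem mem_convexHull_image_of_coord [Finite ι] [Field k] [LinearOrder k] [IsStrictOrderedRing k]
    [Module k V] (b : AffineBasis ι k V) {s : Set ι} {x : V} (hzero : ∀ i ∉ s, b.coord i x = 0)
    (hnonneg : ∀ i ∈ s, 0 ≤ b.coord i x) : x ∈ convexHull k (b '' s) := by
  have := Fintype.ofFinite ι
  rw [← b.linear_combination_coord_eq_self x, ← finsum_eq_sum_of_fintype]
  refine (convex_convexHull k _).finsum_mem (fun i => ?_) ?_ fun i hi => ?_
  · by_cases hi : i ∈ s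
    exacts [hnonneg i hi, (hzero i hi).ge]
  · rw [finsum_eq_sum_of_fintype, b.sum_coord_apply_eq_one]
  · exact subset_convexHull k _ (Set.mem_image_of_mem b (not_imp_comm.mp (hzero i) hi))

theorem mem_intrinsicInterior_convexHull_image_of_coord {E : Type*} [Finite ι]
    [NormedAddCommGroup E] [NormedSpace ℝ E] (b : AffineBasis ι ℝ E) {s : Set ι} {x : E}
    (hzero : ∀ i ∉ s, b.coord i x = 0) (hpos : ∀ i ∈ s, 0 < b.coord i x) :
    x ∈ intrinsicInterior ℝ (convexHull ℝ (b '' s)) := by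
  have := b.finiteDimensional
  have hx := mem_convexHull_image_of_coord b hzero fun i hi => (hpos i hi).le
  let U : Set (affineSpan ℝ (convexHull ℝ (b '' s))) := {y | ∀ i ∈ s, 0 < b.coord i (y : E)}
  have hU : IsOpen U := by
    simp only [U, Set.ofPred_forall]
    exact isOpen_iInter_of_finite fun i => isOpen_iInter_of_finite fun _ => isOpen_lt
      continuous_const ((continuous_barycentric_coord b i).comp continuous_subtype_val)
  refine mem_intrinsicInterior.mpr
    ⟨⟨x, subset_affineSpan ℝ _ hx⟩, mem_interior.mpr ⟨U, ?_, hU, hpos⟩, rfl⟩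
  rintro ⟨y, hy⟩ hyU
  rw [affineSpan_convexHull] at hy
  exact mem_convexHull_image_of_coord b (fun i => coord_eq_zero_of_mem_affineSpan_image b hy)
    fun i hi => (hyU i hi).le

end Face

section Simplex

variable {ι E : Type*} [NormedAddCommGroup E] [InnerProductSpace ℝ E]

/-- The simplex with vertices `v` and load point `p` is stable on its facet opposite `v i`: the
orthogonal projection of `p` onto the affine span of this facet lies in its relative interior.
This is `StableOn` for a facet of a simplex of any dimension. -/
def StableOnFacet (v : ι → E) (p : E) (i : ι) : Prop :=
  ∃ q ∈ intrinsicInterior ℝ (convexHull ℝ (v '' {i}ᶜ)),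
    ∀ w ∈ (affineSpan ℝ (v '' {i}ᶜ)).direction, ⟪p - q, w⟫ = 0

variable [FiniteDimensional ℝ E] (b : AffineBasis ι ℝ E)

/-- The gradient of the `i`-th barycentric coordinate: the normal vector to the facet opposite
the vertex `b i`, pointing into the simplex, whose length is the inverse of the height of the
simplex over this facet. -/
def coordGradient (i : ι) : E :=
  have : CompleteSpace E := FiniteDimensional.complete ℝ E
  (InnerProductSpace.toDual ℝ E).symm (LinearMap.toContinuousLinearMap (b.coord i).linear)

theorem inner_coordGradient (i : ι) (v : E) : ⟪coordGradient b i, v⟫ = (b.coord i).linear v := by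
  simp [coordGradient]

theorem inner_coordGradient_sub (i : ι) (x y : E) :
    ⟪coordGradient b i, x - y⟫ = b.coord i x - b.coord i y := by
  rw [inner_coordGradient]
  exact (b.coord i).linearMap_vsub x y

theorem inner_coordGradient_eq_coord_sub_coord_zero (i : ι) (v : E) :
    ⟪coordGradient b i, v⟫ = b.coord i v - b.coord i 0 := by
  rw [← inner_coordGradient_sub, sub_zero]

theorem coordGradient_ne_zero [Nontrivial ι] (i : ι) : coordGradient b i ≠ 0 := by
  obtain ⟨j, hj⟩ := exists_ne i
  intro h
  simpa [h, b.coord_apply_ne hj.symm] using inner_coordGradient_sub b i (b i) (b j)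

theorem norm_coordGradient_pos [Nontrivial ι] (i : ι) : 0 < ‖coordGradient b i‖ :=
  norm_pos_iff.mpr (coordGradient_ne_zero b i)

theorem sum_coordGradient [Fintype ι] : ∑ i, coordGradient b i = 0 := by
  refine ext_inner_right ℝ fun v => ?_
  simp only [sum_inner, inner_coordGradient_eq_coord_sub_coord_zero, Finset.sum_sub_distrib,
    b.sum_coord_apply_eq_one, sub_self, inner_zero_left]

theorem sum_inner_coordGradient_smul_sub [Fintype ι] (v q : E) :
    ∑ i, ⟪coordGradient b i, v⟫ • (b i - q) = v := by
  simp only [smul_sub, Finset.sum_sub_distrib, ← Finset.sum_smul, ← sum_inner, sum_coordGradient,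
    inner_zero_left, zero_smul, sub_zero]
  simp only [inner_coordGradient_eq_coord_sub_coord_zero, sub_smul, Finset.sum_sub_distrib,
    b.linear_combination_coord_eq_self, sub_zero]

theorem inner_coordGradient_lt_norm_mul_norm [Fintype ι] (hι : 2 < Fintype.card ι) {i j : ι}
    (hij : i ≠ j) :
    ⟪coordGradient b i, coordGradient b j⟫ < ‖coordGradient b i‖ * ‖coordGradient b j‖ := by
  classical
  have : Nontrivial ι := ⟨i, j, hij⟩
  obtain ⟨k, -, hk⟩ := Finset.exists_mem_notMem_of_card_lt_card
    (Finset.card_le_two.trans_lt hι : ({i, j} : Finset ι).card < Finset.univ.card)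
  obtain ⟨hki, hkj⟩ : k ≠ i ∧ k ≠ j := by simpa using hk
  -- The edge from `b k` to `b i` lies in the facet opposite `b j`, not in that opposite `b i`.
  refine inner_lt_norm_mul_iff_real.mpr fun h => ?_
  have hedge := congrArg (fun v => ⟪v, b i - b k⟫) h
  simp only [real_inner_smul_left, inner_coordGradient_sub, b.coord_apply_eq,
    b.coord_apply_ne hki.symm, b.coord_apply_ne hij.symm, b.coord_apply_ne hkj.symm] at hedge
  simp [coordGradient_ne_zero] at hedge

/-- The orthogonal projection of `p` onto the hyperplane of the facet opposite `b i`, obtained by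
moving `p` along the normal `coordGradient b i` until its `i`-th coordinate vanishes. -/
def facetFoot (i : ι) (p : E) : E :=
  p - (b.coord i p / ‖coordGradient b i‖ ^ 2) • coordGradient b i

theorem coord_facetFoot (i j : ι) (p : E) :
    b.coord j (facetFoot b i p) = b.coord j p -
      b.coord i p / ‖coordGradient b i‖ ^ 2 * ⟪coordGradient b i, coordGradient b j⟫ := by
  have h := inner_coordGradient_sub b j p (facetFoot b i p)
  rw [facetFoot, sub_sub_cancel, real_inner_smul_right, real_inner_comm] at h
  rw [facetFoot]
  linarith

theorem coord_facetFoot_self [Nontrivial ι] (i : ι) (p : E) :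
    b.coord i (facetFoot b i p) = 0 := by
  rw [coord_facetFoot, real_inner_self_eq_norm_sq,
    div_mul_cancel₀ _ (pow_ne_zero 2 (norm_coordGradient_pos b i).ne'), sub_self]

theorem inner_sub_facetFoot_eq_zero {i : ι} (p : E) {w : E}
    (hw : w ∈ (affineSpan ℝ (b '' {i}ᶜ)).direction) : ⟪p - facetFoot b i p, w⟫ = 0 := by
  obtain hempty | hne := (b '' {i}ᶜ).eq_empty_or_nonempty
  · simp_all
  obtain ⟨x, hx, y, hy, rfl⟩ :=
    (AffineSubspace.mem_direction_iff_eq_vsub (hne.affineSpan ℝ) w).mp hw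
  have hcoord : ∀ z ∈ affineSpan ℝ (b '' {i}ᶜ), b.coord i z = 0 := fun z hz =>
    coord_eq_zero_of_mem_affineSpan_image b hz (by simp)
  rw [facetFoot, sub_sub_cancel, real_inner_smul_left, vsub_eq_sub, inner_coordGradient_sub,
    hcoord x hx, hcoord y hy, sub_self, mul_zero]

theorem stableOnFacet_of_coord_facetFoot_pos [Nontrivial ι] {i : ι} {p : E}
    (hpos : ∀ j ≠ i, 0 < b.coord j (facetFoot b i p)) : StableOnFacet b p i := by
  have := finite_of_fin_dim_affineIndependent ℝ b.ind
  refine ⟨facetFoot b i p, mem_intrinsicInterior_convexHull_image_of_coord b ?_ hpos,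
    fun _ => inner_sub_facetFoot_eq_zero b p⟩
  intro j hj
  obtain rfl : j = i := by simpa using hj
  exact coord_facetFoot_self b j p

/-- The graph on the facets of a simplex (each labelled by its opposite vertex) joining two facets
when the dihedral angle between them is obtuse. This angle is supplementary to the angle between
the inward normals, so it is obtuse when the inner product of the normals is positive. -/
def obtuseFacetGraph : SimpleGraph ι where
  Adj i j := i ≠ j ∧ 0 < ⟪coordGradient b i, coordGradient b j⟫
  symm := ⟨fun _ _ ⟨hij, h⟩ => ⟨hij.symm, by rwa [real_inner_comm]⟩⟩
  loopless := ⟨fun _ h => h.1 rfl⟩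

theorem obtuseFacetGraph_adj {i j : ι} : (obtuseFacetGraph b).Adj i j ↔
    i ≠ j ∧ 0 < ⟪coordGradient b i, coordGradient b j⟫ :=
  Iff.rfl

theorem not_isUniversal_obtuseFacetGraph [Nontrivial ι] (i : ι) :
    ¬ (obtuseFacetGraph b).IsUniversal i := by
  have := finite_of_fin_dim_affineIndependent ℝ b.ind
  have := Fintype.ofFinite ι
  intro h
  have hpos : 0 < ∑ j, ⟪coordGradient b i, coordGradient b j⟫ := by
    refine Finset.sum_pos (fun j _ => ?_) ⟨i, Finset.mem_univ i⟩
    obtain rfl | hij := eq_or_ne i j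
    exacts [real_inner_self_pos.mpr (coordGradient_ne_zero b i), (h hij).2]
  rw [← inner_sum, sum_coordGradient, inner_zero_right] at hpos
  exact hpos.false

/-- The quotient `b.coord i p / ‖coordGradient b i‖` is the distance from `p` to the facet opposite
`b i`: a simplex that is not stable on a facet can roll across an obtuse dihedral angle onto a facet
which is closer to the load. -/
theorem exists_obtuseFacetGraph_adj_lt_of_not_stableOnFacet [Fintype ι] (hι : 2 < Fintype.card ι)
    {p : E} (hp : ∀ i, 0 < b.coord i p) {i : ι} (hi : ¬ StableOnFacet b p i) :
    ∃ j, (obtuseFacetGraph b).Adj i j ∧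
      b.coord j p / ‖coordGradient b j‖ < b.coord i p / ‖coordGradient b i‖ := by
  have : Nontrivial ι := Fintype.one_lt_card_iff_nontrivial.mp (one_lt_two.trans hι)
  have hnorm := norm_coordGradient_pos b
  obtain ⟨j, hji, hj⟩ : ∃ j ≠ i, b.coord j (facetFoot b i p) ≤ 0 := by
    by_contra! h
    exact hi (stableOnFacet_of_coord_facetFoot_pos b h)
  have hle : b.coord j p * ‖coordGradient b i‖ ^ 2 ≤
      b.coord i p * ⟪coordGradient b i, coordGradient b j⟫ := by
    rwa [coord_facetFoot, sub_nonpos, div_mul_eq_mul_div, le_div_iff₀ (pow_pos (hnorm i) 2)] at hj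
  have hinner : 0 < ⟪coordGradient b i, coordGradient b j⟫ :=
    pos_of_mul_pos_right ((mul_pos (hp j) (pow_pos (hnorm i) 2)).trans_le hle) (hp i).le
  refine ⟨j, ⟨hji.symm, hinner⟩, ?_⟩
  rw [div_lt_div_iff₀ (hnorm j) (hnorm i)]
  refine lt_of_mul_lt_mul_right ?_ (hnorm i).le
  calc b.coord j p * ‖coordGradient b i‖ * ‖coordGradient b i‖
      = b.coord j p * ‖coordGradient b i‖ ^ 2 := by ring
    _ ≤ b.coord i p * ⟪coordGradient b i, coordGradient b j⟫ := hle
    _ < b.coord i p * (‖coordGradient b i‖ * ‖coordGradient b j‖) :=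
        mul_lt_mul_of_pos_left (inner_coordGradient_lt_norm_mul_norm b hι hji.symm) (hp i)
    _ = b.coord i p * ‖coordGradient b j‖ * ‖coordGradient b i‖ := by ring

/-- Expand one factor of `⟪coordGradient b k, b l - q⟫ = 0` in the vectors `b t - q`: all terms
but those of `k` and `l` vanish. -/
theorem norm_sq_coordGradient_mul_inner_sub {k l : ι} (hkl : k ≠ l) {q : E}
    (hk : b.coord k q = 0) (horth : ∀ t, t ≠ k → t ≠ l → ⟪b t - q, b l - q⟫ = 0) :
    ‖coordGradient b k‖ ^ 2 * ⟪b k - q, b l - q⟫ =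
      -(⟪coordGradient b k, coordGradient b l⟫ * ‖b l - q‖ ^ 2) := by
  have := finite_of_fin_dim_affineIndependent ℝ b.ind
  have := Fintype.ofFinite ι
  have hzero : ⟪coordGradient b k, b l - q⟫ = 0 := by
    rw [inner_coordGradient_sub, b.coord_apply_ne hkl, hk, sub_self]
  rw [← sum_inner_coordGradient_smul_sub b (coordGradient b k) q, sum_inner,
    Fintype.sum_eq_add k l hkl fun t ht => by
      rw [real_inner_smul_left, horth t ht.1 ht.2, mul_zero],
    real_inner_smul_left, real_inner_smul_left, real_inner_self_eq_norm_sq,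
    real_inner_self_eq_norm_sq] at hzero
  rw [real_inner_comm (coordGradient b l)]
  linarith

theorem inner_sub_neg_iff_inner_coordGradient_pos {k l : ι} (hkl : k ≠ l) {q : E}
    (hk : b.coord k q = 0) (hl : b.coord l q = 0)
    (horth : ∀ t, t ≠ k → t ≠ l → ⟪b t - q, b l - q⟫ = 0) :
    ⟪b k - q, b l - q⟫ < 0 ↔ 0 < ⟪coordGradient b k, coordGradient b l⟫ := by
  have : Nontrivial ι := ⟨k, l, hkl⟩
  have hgrad : 0 < ‖coordGradient b k‖ ^ 2 := pow_pos (norm_coordGradient_pos b k) 2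
  have hne : b l ≠ q := by
    rintro rfl
    simp at hl
  have hnorm : 0 < ‖b l - q‖ ^ 2 := pow_pos (norm_pos_iff.mpr (sub_ne_zero.mpr hne)) 2
  rw [← neg_pos, ← mul_pos_iff_of_pos_left hgrad, mul_neg,
    norm_sq_coordGradient_mul_inner_sub b hkl hk horth, neg_neg, mul_pos_iff_of_pos_right hnorm]

end Simplex

theorem eq_or_eq_or_eq_or_eq_of_nodup {i j k l : Fin 4} (hnodup : [i, j, k, l].Nodup) (t : Fin 4) :
    t = i ∨ t = j ∨ t = k ∨ t = l := by
  revert i j k l t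
  decide

theorem isUniversal_of_nodup {G : SimpleGraph (Fin 4)} {i j k l : Fin 4}
    (hnodup : [i, j, k, l].Nodup) (hj : G.Adj i j) (hk : G.Adj i k) (hl : G.Adj i l) :
    G.IsUniversal i := by
  intro t hit
  obtain rfl | rfl | rfl | rfl := eq_or_eq_or_eq_or_eq_of_nodup hnodup t
  exacts [absurd rfl hit, hj, hk, hl]

theorem exists_perm_adj_of_nodup {G : SimpleGraph (Fin 4)} {i j k l : Fin 4}
    (hnodup : [i, j, k, l].Nodup) (hij : G.Adj i j) (hjk : G.Adj j k) (hkl : G.Adj k l) :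
    ∃ τ : Equiv.Perm (Fin 4), G.Adj (τ 0) (τ 1) ∧ G.Adj (τ 1) (τ 2) ∧ G.Adj (τ 2) (τ 3) :=
  ⟨.ofBijective ![i, j, k, l] (Finite.injective_iff_bijective.mp (List.nodup_ofFn.mp hnodup)),
    hij, hjk, hkl⟩

theorem exists_perm_adj_of_parent_lt {G : SimpleGraph (Fin 4)}
    (hparent : ∀ i ≠ 0, ∃ j < i, G.Adj i j) (huniv : ∀ i, ¬ G.IsUniversal i) :
    ∃ τ : Equiv.Perm (Fin 4), G.Adj (τ 0) (τ 1) ∧ G.Adj (τ 1) (τ 2) ∧ G.Adj (τ 2) (τ 3) := by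
  have h10 : G.Adj 1 0 := by
    obtain ⟨j, hj, h⟩ := hparent 1 (by decide)
    obtain rfl : j = 0 := by omega
    exact h
  have h2 : G.Adj 2 0 ∨ G.Adj 2 1 := by
    obtain ⟨j, hj, h⟩ := hparent 2 (by decide)
    obtain rfl | rfl : j = 0 ∨ j = 1 := by omega
    exacts [.inl h, .inr h]
  have h3 : G.Adj 3 0 ∨ G.Adj 3 1 ∨ G.Adj 3 2 := by
    obtain ⟨j, hj, h⟩ := hparent 3 (by decide)
    obtain rfl | rfl | rfl : j = 0 ∨ j = 1 ∨ j = 2 := by omega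
    exacts [.inl h, .inr (.inl h), .inr (.inr h)]
  obtain h20 | h21 := h2 <;> obtain h30 | h31 | h32 := h3
  · exact (huniv 0 (isUniversal_of_nodup (by decide) h10.symm h20.symm h30.symm)).elim
  · exact exists_perm_adj_of_nodup (by decide) h31 h10 h20.symm
  · exact exists_perm_adj_of_nodup (by decide) h32 h20 h10.symm
  · exact exists_perm_adj_of_nodup (by decide) h21 h10 h30.symm
  · exact (huniv 1 (isUniversal_of_nodup (by decide) h10 h21.symm h31.symm)).elim
  · exact exists_perm_adj_of_nodup (by decide) h32 h21 h10

theorem exists_perm_adj_of_exists_adj_lt {α : Type*} [LinearOrder α] {G : SimpleGraph (Fin 4)}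
    {d : Fin 4 → α} {s : Fin 4} (hdescent : ∀ i ≠ s, ∃ j, G.Adj i j ∧ d j < d i)
    (huniv : ∀ i, ¬ G.IsUniversal i) :
    ∃ τ : Equiv.Perm (Fin 4), G.Adj (τ 0) (τ 1) ∧ G.Adj (τ 1) (τ 2) ∧ G.Adj (τ 2) (τ 3) := by
  let ρ := Tuple.sort d
  have hlt : ∀ i, ρ i ≠ s → ∃ j < i, G.Adj (ρ i) (ρ j) := by
    intro i hi
    obtain ⟨j, hadj, hj⟩ := hdescent (ρ i) hi
    refine ⟨ρ.symm j, (Tuple.monotone_sort d).reflect_lt ?_, ?_⟩ <;> simpa [ρ]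
  have hs : ρ 0 = s := by
    by_contra h
    obtain ⟨j, hj, -⟩ := hlt 0 h
    exact Fin.not_lt_zero j hj
  obtain ⟨τ, hτ⟩ := exists_perm_adj_of_parent_lt (G := G.comap ρ)
    (fun i hi => hlt i fun h => hi (ρ.injective (h.trans hs.symm))) fun i h =>
      huniv (ρ i) fun j hij => by
        simpa using @h (ρ.symm j) fun h' => hij (by simp [h'])
  exact ⟨τ.trans ρ, hτ⟩

theorem obtuseEdge_iff_obtuseFacetGraph_adj (b : AffineBasis (Fin 4) ℝ E3) {i j k l : Fin 4}
    (hnodup : [i, j, k, l].Nodup) :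
    ObtuseEdge (b i) (b j) (b k) (b l) ↔ (obtuseFacetGraph b).Adj k l := by
  obtain ⟨⟨hij, hik, hil⟩, ⟨hjk, hjl⟩, hkl⟩ :
      (i ≠ j ∧ i ≠ k ∧ i ≠ l) ∧ (j ≠ k ∧ j ≠ l) ∧ k ≠ l := by simpa using hnodup
  unfold ObtuseEdge
  set u := b j - b i with hu
  set c := ⟪b l - b i, u⟫ / ⟪u, u⟫
  have hself : ⟪u, u⟫ ≠ 0 := inner_self_ne_zero.mpr (sub_ne_zero.mpr (b.ind.injective.ne hij.symm))
  -- The foot of the perpendicular from `b l` to the edge.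
  let q : E3 := AffineMap.lineMap (b i) (b j) c
  have hq : q = b i + c • u := by simp [q, AffineMap.lineMap_apply, hu, add_comm]
  have hS : b l - b i - c • u = b l - q := by rw [hq, sub_sub]
  have huS : ⟪u, b l - q⟫ = 0 := by
    rw [← hS, inner_sub_right, real_inner_smul_right, div_mul_cancel₀ _ hself,
      real_inner_comm, sub_self]
  have hR : ⟪b k - b i - (⟪b k - b i, u⟫ / ⟪u, u⟫) • u, b l - q⟫ = ⟪b k - q, b l - q⟫ := by
    rw [hq, ← sub_sub (b k), ← hq, inner_sub_left, inner_sub_left _ (c • u), real_inner_smul_left,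
      real_inner_smul_left, huS, mul_zero, mul_zero]
  have hcoord : ∀ t, t ≠ i → t ≠ j → b.coord t q = 0 := fun t hti htj => by
    simp [q, AffineMap.apply_lineMap, hti, htj]
  rw [hS, hR, obtuseFacetGraph_adj, and_iff_right hkl]
  refine inner_sub_neg_iff_inner_coordGradient_pos b hkl (hcoord k hik.symm hjk.symm)
    (hcoord l hil.symm hjl.symm) fun t htk htl => ?_
  obtain rfl | rfl | rfl | rfl := eq_or_eq_or_eq_or_eq_of_nodup hnodup t
  · rw [show b t - q = -(c • u) by rw [hq]; abel, inner_neg_left, real_inner_smul_left, huS,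
      mul_zero, neg_zero]
  · rw [show b t - q = u - c • u by rw [hq, hu]; abel, inner_sub_left, real_inner_smul_left, huS,
      mul_zero, sub_zero]
  exacts [absurd rfl htk, absurd rfl htl]

theorem faceStable_iff_stableOnFacet (v : Fin 4 → E3) (p : E3) (i : Fin 4) :
    FaceStable (v 0) (v 1) (v 2) (v 3) p i ↔ StableOnFacet v p i := by
  have hface : ∀ {j k l : Fin 4}, ({i}ᶜ : Set (Fin 4)) = {j, k, l} →
      (StableOn p (v j) (v k) (v l) ↔ StableOnFacet v p i) := fun h => by
    simp only [StableOnFacet, h, Set.image_insert_eq, Set.image_singleton, StableOn]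
  fin_cases i <;> exact hface (by ext t; fin_cases t <;> simp)

/-- **A loadable tetrahedron has an obtuse path**: if there is a point `p` in the
interior of the tetrahedron `ABCD` such that the tetrahedron with load `p` is
stable on exactly one face, then the vertices can be relabeled `a, b, c, d` (via
a permutation `σ`) so that the edges `ab`, `bc` and `cd` are all obtuse. -/
theorem loadable_tetrahedron_has_obtuse_path (A B C D : E3)
    (h : AffineIndependent ℝ ![A, B, C, D])
    (hload : ∃ p ∈ interior (convexHull ℝ ({A, B, C, D} : Set E3)),
      ∃! i : Fin 4, FaceStable A B C D p i) :
    ∃ σ : Equiv.Perm (Fin 4),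
      ObtuseEdge (![A, B, C, D] (σ 0)) (![A, B, C, D] (σ 1))
        (![A, B, C, D] (σ 2)) (![A, B, C, D] (σ 3)) ∧
      ObtuseEdge (![A, B, C, D] (σ 1)) (![A, B, C, D] (σ 2))
        (![A, B, C, D] (σ 0)) (![A, B, C, D] (σ 3)) ∧
      ObtuseEdge (![A, B, C, D] (σ 2)) (![A, B, C, D] (σ 3))
        (![A, B, C, D] (σ 0)) (![A, B, C, D] (σ 1)) := by
  obtain ⟨p, hp, s, -, hs⟩ := hload
  have htop : affineSpan ℝ (Set.range ![A, B, C, D]) = ⊤ := by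
    rw [h.affineSpan_eq_top_iff_card_eq_finrank_add_one]
    simp
  let b : AffineBasis (Fin 4) ℝ E3 := ⟨![A, B, C, D], h, htop⟩
  have hrange : Set.range b = {A, B, C, D} := by
    change Set.range ![A, B, C, D] = _
    simp only [Matrix.range_cons, Matrix.range_empty, Set.union_empty, Set.singleton_union]
  rw [← hrange, b.interior_convexHull] at hp
  have hunstable : ∀ i ≠ s, ¬ StableOnFacet b p i := fun i hi hstable =>
    hi (hs i ((faceStable_iff_stableOnFacet b p i).mpr hstable))
  obtain ⟨τ, h₀₁, h₁₂, h₂₃⟩ := exists_perm_adj_of_exists_adj_lt (s := s)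
    (fun i hi => exists_obtuseFacetGraph_adj_lt_of_not_stableOnFacet b (by simp) hp
      (hunstable i hi))
    (not_isUniversal_obtuseFacetGraph b)
  have hobtuse {i j k l : Fin 4} (hnodup : [i, j, k, l].Nodup)
      (hadj : (obtuseFacetGraph b).Adj (τ k) (τ l)) :
      ObtuseEdge (b (τ i)) (b (τ j)) (b (τ k)) (b (τ l)) :=
    (obtuseEdge_iff_obtuseFacetGraph_adj b (hnodup.map τ.injective)).mpr hadj
  -- An edge lies on the facets labelled by the two other vertices, hence the shift by two.
  exact ⟨(Equiv.addRight 2).trans τ, hobtuse (i := 2) (j := 3) (by decide) h₀₁,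
    hobtuse (i := 3) (j := 0) (by decide) h₁₂.symm, hobtuse (i := 0) (j := 1) (by decide) h₂₃⟩
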